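/- arXiv:1610.07302 — 2 statements merged into one kernel-verified Lean document; each statement's English description precedes it below -/
import Mathlib

section
/- Let a_1,…,a_n and b_1,…,b_n be positive real numbers such that (a_1,…,a_n) is weakly submajorized by (b_1,…,b_n). Then the function x ↦ ∏_{i=1}^n sinh(a_i·x)/sinh(b_i·x) (extended by continuity at x = 0) is infinitely divisible. -/
open scoped ComplexOrder

/-- A function `φ : ℝ → ℂ` is positive definite if for every `n`, all real numbers
`x 1, …, x n` and complex numbers `c 1, …, c n`, the sum
`∑ i j, c i * conj (c j) * φ (x i - x j)` is a nonnegative real number. -/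
def IsPosDefFun (φ : ℝ → ℂ) : Prop :=
  ∀ (n : ℕ) (x : Fin n → ℝ) (c : Fin n → ℂ),
    0 ≤ ∑ i, ∑ j, c i * (starRingEnd ℂ) (c j) * φ (x i - x j)

/-- A real-valued function is infinitely divisible if every positive real power of it
is positive definite. -/
def IsInfDivFun (φ : ℝ → ℝ) : Prop :=
  ∀ r : ℝ, 0 < r → IsPosDefFun fun x => ((φ x ^ r : ℝ) : ℂ)


/-- The function `x ↦ ∏ i, sinh (a i * x) / sinh (b i * x)`, extended by continuity
at `x = 0` (where it takes the value `∏ i, a i / b i`). -/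
noncomputable def sinhProd {n : ℕ} (a b : Fin n → ℝ) (x : ℝ) : ℝ :=
  if x = 0 then ∏ i, a i / b i else ∏ i, Real.sinh (a i * x) / Real.sinh (b i * x)

/-- `a` is weakly submajorized by `b`: after rearranging both tuples in decreasing
order, every partial sum of `a` is at most the corresponding partial sum of `b`. -/
def IsWeaklySubmajorizedBy {n : ℕ} (a b : Fin n → ℝ) : Prop :=
  ∃ σ τ : Equiv.Perm (Fin n),
    (∀ i j : Fin n, i ≤ j → a (σ j) ≤ a (σ i)) ∧
    (∀ i j : Fin n, i ≤ j → b (τ j) ≤ b (τ i)) ∧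
    ∀ k : Fin n, ∑ i ∈ Finset.Iic k, a (σ i) ≤ ∑ i ∈ Finset.Iic k, b (τ i)

open Filter Topology MeasureTheory

theorem posSemidef_iff_sum_nonneg {ι : Type*} [Fintype ι] {M : Matrix ι ι ℝ} :
    M.PosSemidef ↔ (∀ i j, M i j = M j i) ∧
      ∀ c : ι → ℝ, 0 ≤ ∑ i, ∑ j, c i * c j * M i j := by
  rw [Matrix.posSemidef_iff_dotProduct_mulVec]
  have key (c : ι → ℝ) :
      star c ⬝ᵥ M.mulVec c = ∑ i, ∑ j, c i * c j * M i j := by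
    simp only [dotProduct, Matrix.mulVec, Finset.mul_sum, Pi.star_apply, star_trivial]
    exact Finset.sum_congr rfl fun i _ => Finset.sum_congr rfl fun j _ => by ring
  simp only [key]
  refine and_congr_left fun _ => ?_
  rw [Matrix.IsHermitian.ext_iff]
  exact ⟨fun h i j => by simpa using h j i, fun h i j => by simpa using h j i⟩

theorem posSemidef_of_tendsto {ι : Type*} [Fintype ι] {M : ℕ → Matrix ι ι ℝ} {L : Matrix ι ι ℝ}
    (hM : ∀ n, (M n).PosSemidef)
    (hL : ∀ i j, Tendsto (fun n => M n i j) atTop (𝓝 (L i j))) : L.PosSemidef := by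
  simp only [posSemidef_iff_sum_nonneg] at hM ⊢
  refine ⟨fun i j => tendsto_nhds_unique (hL i j) ?_, fun c => ?_⟩
  · simpa only [(hM _).1 i j] using hL j i
  · refine ge_of_tendsto' (tendsto_finsetSum _ fun i _ => tendsto_finsetSum _ fun j _ =>
      (hL i j).const_mul (c i * c j)) fun n => (hM n).2 c

theorem posSemidef_of_one (ι : Type*) [Fintype ι] :
    (Matrix.of fun _ _ : ι => (1 : ℝ)).PosSemidef := by
  refine posSemidef_iff_sum_nonneg.2 ⟨fun _ _ => rfl, fun c => ?_⟩
  simp only [Matrix.of_apply, mul_one, ← Finset.mul_sum, ← Finset.sum_mul]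
  exact mul_self_nonneg _

theorem posSemidef_entrywise_prod {ι κ : Type*} [Fintype ι] (s : Finset κ)
    {M : κ → Matrix ι ι ℝ} (hM : ∀ k ∈ s, (M k).PosSemidef) :
    (Matrix.of fun i j => ∏ k ∈ s, M k i j).PosSemidef := by
  classical
  induction s using Finset.induction_on with
  | empty => simpa using posSemidef_of_one ι
  | insert k s hk ih =>
    simp only [Finset.prod_insert hk]
    exact (hM k (by simp)).hadamard (ih fun l hl => hM l (by simp [hl]))

theorem posSemidef_entrywise_exp {ι : Type*} [Fintype ι] {M : Matrix ι ι ℝ}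
    (hM : M.PosSemidef) : (Matrix.of fun i j => Real.exp (M i j)).PosSemidef := by
  refine posSemidef_of_tendsto
    (M := fun n => ∑ k ∈ Finset.range n,
      ((k.factorial : ℝ)⁻¹) • Matrix.of fun i j => ∏ _l ∈ Finset.range k, M i j) (fun n => ?_)
    fun i j => ?_
  · exact Matrix.posSemidef_sum _ fun k _ =>
      (posSemidef_entrywise_prod _ fun _ _ => hM).smul (by positivity)
  · have h := (NormedSpace.expSeries_div_hasSum_exp (M i j)).tendsto_sum_nat
    rw [← congrFun Real.exp_eq_exp_ℝ] at h
    simpa [Matrix.sum_apply, div_eq_inv_mul] using h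

theorem inv_one_add_sq_eq_integral (d : ℝ) :
    IntegrableOn (fun t : ℝ => Real.exp (-t) * Real.cos (t * d)) (Set.Ioi 0) ∧
      ∫ t in Set.Ioi (0 : ℝ), Real.exp (-t) * Real.cos (t * d) = (1 + d ^ 2)⁻¹ := by
  have hre : (-1 + d * Complex.I : ℂ).re < 0 := by simp
  have key (t : ℝ) : Real.exp (-t) * Real.cos (t * d) =
      (Complex.exp ((-1 + d * Complex.I) * t)).re := by
    rw [Complex.exp_re]
    simp [mul_comm]
  simp only [key]
  have hint := integrableOn_exp_mul_complex_Ioi hre 0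
  refine ⟨hint.re, ?_⟩
  have := integral_re hint
  simp only [RCLike.re_to_complex] at this
  rw [this, integral_exp_mul_complex_Ioi hre]
  simp [Complex.normSq_apply, Complex.div_re]
  field_simp

theorem posSemidef_inv_one_add_sq {ι : Type*} [Fintype ι] (x : ι → ℝ) :
    (Matrix.of fun i j => (1 + (x i - x j) ^ 2)⁻¹).PosSemidef := by
  refine posSemidef_iff_sum_nonneg.2 ⟨fun i j => ?_, fun c => ?_⟩
  · simp only [Matrix.of_apply, ← neg_sub (x i) (x j), neg_sq]
  simp only [Matrix.of_apply, ← (inv_one_add_sq_eq_integral _).2, ← integral_const_mul]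
  simp_rw [← integral_finsetSum Finset.univ fun j _ =>
    ((inv_one_add_sq_eq_integral (_ - x j)).1.const_mul _)]
  rw [← integral_finsetSum Finset.univ fun i _ => integrable_finsetSum _ fun j _ =>
    ((inv_one_add_sq_eq_integral (x i - x j)).1.const_mul _)]
  refine integral_nonneg fun t => ?_
  have : ∑ i, ∑ j, c i * c j * (Real.exp (-t) * Real.cos (t * (x i - x j))) =
      Real.exp (-t) * ((∑ i, c i * Real.cos (t * x i)) ^ 2 +
        (∑ i, c i * Real.sin (t * x i)) ^ 2) := by
    rw [sq, sq, Finset.sum_mul_sum, Finset.sum_mul_sum]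
    simp only [← Finset.sum_add_distrib, Finset.mul_sum]
    refine Finset.sum_congr rfl fun i _ => Finset.sum_congr rfl fun j _ => ?_
    rw [mul_sub, Real.cos_sub]
    ring
  simp only [this]
  positivity

/-- The function `d ↦ sinh (b * d) / d`, extended by continuity at `d = 0`. -/
noncomputable def sinhDiv (d b : ℝ) : ℝ := if d = 0 then b else Real.sinh (b * d) / d

theorem sinhDiv_mul (d b : ℝ) : d * sinhDiv d b = Real.sinh (b * d) := by
  rw [sinhDiv]
  split_ifs with h
  · simp [h]
  · field_simp

theorem sinhDiv_neg (d b : ℝ) : sinhDiv (-d) b = sinhDiv d b := by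
  simp [sinhDiv]

theorem hasDerivAt_sinhDiv (d b : ℝ) : HasDerivAt (sinhDiv d) (Real.cosh (b * d)) b := by
  by_cases h : d = 0
  · have : sinhDiv d = id := by ext; simp [sinhDiv, h]
    rw [this]
    simpa [h] using hasDerivAt_id b
  · have : sinhDiv d = fun b => Real.sinh (b * d) / d := by ext; simp [sinhDiv, h]
    rw [this]
    have := (((hasDerivAt_id' b).mul_const d).sinh).div_const d
    rwa [one_mul, mul_div_cancel_right₀ _ h] at this

theorem exists_sinhDiv_eq (d : ℝ) {b : ℝ} (hb : 0 < b) :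
    ∃ ξ ∈ Set.Ioo 0 b, sinhDiv d b = b * Real.cosh (ξ * d) := by
  obtain ⟨ξ, hξ, h⟩ := exists_hasDerivAt_eq_slope (sinhDiv d) (fun b => Real.cosh (b * d)) hb
    (fun t _ => (hasDerivAt_sinhDiv d t).continuousAt.continuousWithinAt)
    fun t _ => hasDerivAt_sinhDiv d t
  refine ⟨ξ, hξ, ?_⟩
  have h0 : sinhDiv d 0 = 0 := by simp [sinhDiv]
  rw [h, h0, sub_zero, sub_zero, mul_div_cancel₀ _ hb.ne']

theorem le_sinhDiv (d : ℝ) {b : ℝ} (hb : 0 < b) : b ≤ sinhDiv d b := by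
  obtain ⟨ξ, -, h⟩ := exists_sinhDiv_eq d hb
  rw [h]
  exact le_mul_of_one_le_right hb.le (Real.one_le_cosh _)

theorem sinhDiv_pos (d : ℝ) {b : ℝ} (hb : 0 < b) : 0 < sinhDiv d b :=
  hb.trans_le (le_sinhDiv d hb)

theorem sinhDiv_le (d : ℝ) {b : ℝ} (hb : 0 < b) : sinhDiv d b ≤ b * Real.cosh (b * d) := by
  obtain ⟨ξ, hξ, h⟩ := exists_sinhDiv_eq d hb
  rw [h]
  refine mul_le_mul_of_nonneg_left (Real.cosh_le_cosh.2 ?_) hb.le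
  rw [abs_mul, abs_mul, abs_of_pos hξ.1, abs_of_pos hb]
  exact mul_le_mul_of_nonneg_right hξ.2.le (abs_nonneg d)

theorem tendsto_euler_sinh_prod (x : ℝ) :
    Tendsto (fun n : ℕ => x * ∏ j ∈ Finset.range n, (1 + (x / (Real.pi * (j + 1))) ^ 2)) atTop
      (𝓝 (Real.sinh x)) := by
  have h := (Complex.tendsto_euler_sin_prod (x * Complex.I / Real.pi)).mul_const (-Complex.I)
  have hpi : (Real.pi : ℂ) ≠ 0 := by exact_mod_cast Real.pi_ne_zero
  rw [mul_div_cancel₀ _ hpi, Complex.sin_mul_I] at h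
  have h1 : Complex.sinh x * Complex.I * -Complex.I = (Real.sinh x : ℂ) := by
    push_cast
    linear_combination (-Complex.sinh x) * Complex.I_sq
  rw [h1] at h
  rw [← Filter.tendsto_ofReal_iff]
  refine h.congr fun n => ?_
  push_cast
  have h2 : ∏ j ∈ Finset.range n, (1 - (x * Complex.I / Real.pi) ^ 2 / ((j : ℂ) + 1) ^ 2) =
      ∏ j ∈ Finset.range n, (1 + (x / (Real.pi * ((j : ℂ) + 1))) ^ 2) := by
    refine Finset.prod_congr rfl fun j _ => ?_
    have : (j : ℂ) + 1 ≠ 0 := by exact_mod_cast j.succ_ne_zero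
    field_simp
    rw [Complex.I_sq]
    ring
  rw [h2]
  linear_combination (-(x : ℂ) * ∏ j ∈ Finset.range n,
    (1 + (x / (Real.pi * ((j : ℂ) + 1))) ^ 2)) * Complex.I_sq

theorem tendsto_sinhDiv_prod (d b : ℝ) :
    Tendsto (fun n : ℕ => b * ∏ j ∈ Finset.range n, (1 + (b * d / (Real.pi * (j + 1))) ^ 2)) atTop
      (𝓝 (sinhDiv d b)) := by
  by_cases h : d = 0
  · simp [h, sinhDiv]
  · have := (tendsto_euler_sinh_prod (b * d)).div_const d
    simp only [sinhDiv, h, if_false]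
    refine this.congr fun n => ?_
    field_simp

theorem posSemidef_inv_sinhDiv {ι : Type*} [Fintype ι] (x : ι → ℝ) {b : ℝ} (hb : 0 < b) :
    (Matrix.of fun i j => (sinhDiv (x i - x j) b)⁻¹).PosSemidef := by
  refine posSemidef_of_tendsto
    (M := fun n => b⁻¹ • Matrix.of fun i j => ∏ k ∈ Finset.range n,
      (Matrix.of fun i j => (1 + (b / (Real.pi * (k + 1)) * x i -
        b / (Real.pi * (k + 1)) * x j) ^ 2)⁻¹) i j) (fun n => ?_) fun i j => ?_
  · exact (posSemidef_entrywise_prod _ fun k _ => posSemidef_inv_one_add_sq _).smul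
      (inv_nonneg.2 hb.le)
  · refine ((tendsto_sinhDiv_prod (x i - x j) b).inv₀ (sinhDiv_pos _ hb).ne').congr fun n => ?_
    simp only [Matrix.smul_apply, Matrix.of_apply, mul_inv, smul_eq_mul, ← Finset.prod_inv_distrib]
    congr 1
    refine Finset.prod_congr rfl fun k _ => ?_
    congr 3
    ring

theorem sum_mul_nonneg_of_antitone {n : ℕ} {w δ : Fin n → ℝ} (hw : ∀ i, 0 ≤ w i)
    (hanti : Antitone w) (hδ : ∀ k, 0 ≤ ∑ i ∈ Finset.Iic k, δ i) : 0 ≤ ∑ i, w i * δ i := by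
  have key (k : Fin n) :
      w k * ∑ i ∈ Finset.Iic k, δ i ≤ ∑ i ∈ Finset.Iic k, w i * δ i := by
    obtain ⟨k, hk⟩ := k
    induction k with
    | zero =>
      have : Finset.Iic (⟨0, hk⟩ : Fin n) = {⟨0, hk⟩} := by
        ext i
        simp [Fin.le_def, Fin.ext_iff]
      simp [this]
    | succ k ih =>
      have hk' : k < n := k.lt_succ_self.trans hk
      have hI : Finset.Iic (⟨k + 1, hk⟩ : Fin n) =
          insert ⟨k + 1, hk⟩ (Finset.Iic ⟨k, hk'⟩) := by
        ext i
        simp only [Finset.mem_Iic, Finset.mem_insert, Fin.le_def, Fin.ext_iff]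
        omega
      have hnot : (⟨k + 1, hk⟩ : Fin n) ∉ Finset.Iic (⟨k, hk'⟩ : Fin n) := by
        simp [Fin.le_def]
      rw [hI, Finset.sum_insert hnot, Finset.sum_insert hnot, mul_add]
      have hle : w ⟨k + 1, hk⟩ ≤ w ⟨k, hk'⟩ := hanti (by simp [Fin.le_def])
      exact add_le_add_right ((mul_le_mul_of_nonneg_right hle (hδ _)).trans (ih hk')) _
  cases n with
  | zero => simp
  | succ n =>
    have hI : Finset.Iic (Fin.last n) = Finset.univ := by
      ext i
      simp [Fin.le_last]
    have := (mul_nonneg (hw _) (hδ _)).trans (key (Fin.last n))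
    rwa [hI] at this

theorem tendsto_cosh_div_sinhDiv_sub (d : ℝ) :
    Tendsto (fun b => Real.cosh (b * d) / sinhDiv d b - b⁻¹) (𝓝[>] 0) (𝓝 0) := by
  have hd : HasDerivAt (fun b : ℝ => Real.cosh (b * d)) 0 0 := by
    simpa using ((hasDerivAt_id' (0 : ℝ)).mul_const d).cosh
  have hs := hd.tendsto_slope_zero_right
  simp only [zero_add, zero_mul, Real.cosh_zero, smul_eq_mul] at hs
  refine tendsto_of_tendsto_of_tendsto_of_le_of_le' tendsto_const_nhds hs ?_ ?_
  · filter_upwards [self_mem_nhdsWithin] with b (hb : 0 < b)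
    rw [sub_nonneg, le_div_iff₀ (sinhDiv_pos d hb), inv_mul_le_iff₀ hb]
    exact sinhDiv_le d hb
  · filter_upwards [self_mem_nhdsWithin] with b (hb : 0 < b)
    have := div_le_div_of_nonneg_left (Real.cosh_pos (b * d)).le hb (le_sinhDiv d hb)
    rw [mul_sub, mul_one, inv_mul_eq_div]
    exact sub_le_sub_right this _

theorem hasDerivAt_log_sinhDiv (d : ℝ) {b : ℝ} (hb : 0 < b) :
    HasDerivAt (fun b => Real.log (sinhDiv d b)) (Real.cosh (b * d) / sinhDiv d b) b :=
  (hasDerivAt_sinhDiv d b).log (sinhDiv_pos d hb).ne'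

theorem hasDerivAt_cosh_div_sinhDiv (d : ℝ) {b : ℝ} (hb : 0 < b) :
    HasDerivAt (fun b => Real.cosh (b * d) / sinhDiv d b)
      (-((sinhDiv d b)⁻¹ * (sinhDiv d b)⁻¹)) b := by
  have hS := (sinhDiv_pos d hb).ne'
  refine (((hasDerivAt_id' b).mul_const d).cosh.fun_div (hasDerivAt_sinhDiv d b) hS).congr_deriv ?_
  rw [← mul_inv, ← pow_two (sinhDiv d b), neg_eq_neg_one_mul, ← div_eq_mul_inv]
  congr 1
  linear_combination Real.sinh (b * d) * sinhDiv_mul d b - Real.cosh_sq (b * d)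

/-- **Tomić–Weyl inequality** for a differentiable function on `(0, ∞)` with nonnegative monotone
derivative. -/
theorem IsWeaklySubmajorizedBy.sum_le_sum {n : ℕ} {a b : Fin n → ℝ} (ha : ∀ i, 0 < a i)
    (hb : ∀ i, 0 < b i) (hab : IsWeaklySubmajorizedBy a b) {f f₁ : ℝ → ℝ}
    (hf : ∀ t, 0 < t → HasDerivAt f (f₁ t) t) (hmono : MonotoneOn f₁ (Set.Ioi 0))
    (hnonneg : ∀ t, 0 < t → 0 ≤ f₁ t) : ∑ i, f (a i) ≤ ∑ i, f (b i) := by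
  have tangent {s t : ℝ} (hs : 0 < s) (ht : 0 < t) : f₁ s * (t - s) ≤ f t - f s := by
    rcases lt_trichotomy s t with h | rfl | h
    · obtain ⟨c, hc, hc'⟩ := exists_hasDerivAt_eq_slope f f₁ h
        (fun u hu => (hf u (hs.trans_le hu.1)).continuousAt.continuousWithinAt)
        fun u hu => hf u (hs.trans hu.1)
      rw [eq_div_iff (sub_pos.2 h).ne'] at hc'
      rw [← hc']
      exact mul_le_mul_of_nonneg_right (hmono hs (hs.trans hc.1) hc.1.le) (sub_pos.2 h).le
    · simp
    · obtain ⟨c, hc, hc'⟩ := exists_hasDerivAt_eq_slope f f₁ h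
        (fun u hu => (hf u (ht.trans_le hu.1)).continuousAt.continuousWithinAt)
        fun u hu => hf u (ht.trans hu.1)
      rw [eq_div_iff (sub_pos.2 h).ne'] at hc'
      have := mul_le_mul_of_nonneg_right (hmono (ht.trans hc.1) hs hc.2.le) (sub_pos.2 h).le
      linarith
  obtain ⟨σ, τ, hσ, -, hsum⟩ := hab
  rw [← Equiv.sum_comp σ, ← Equiv.sum_comp τ fun i => f (b i), ← sub_nonneg,
    ← Finset.sum_sub_distrib]
  refine le_trans ?_ (Finset.sum_le_sum fun i _ => tangent (ha (σ i)) (hb (τ i)))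
  refine sum_mul_nonneg_of_antitone (fun i => hnonneg _ (ha _))
    (fun i j hij => hmono (ha _) (ha _) (hσ i j hij)) fun k => ?_
  simpa only [Finset.sum_sub_distrib, sub_nonneg] using hsum k

theorem sum_sum_mul_log_sinhDiv_nonneg {ι : Type*} [Fintype ι] (x c : ι → ℝ) (hc : ∑ i, c i = 0)
    {n : ℕ} {a b : Fin n → ℝ} (ha : ∀ i, 0 < a i) (hb : ∀ i, 0 < b i)
    (hab : IsWeaklySubmajorizedBy a b) :
    0 ≤ ∑ i, ∑ j, c i * c j * ∑ k, (Real.log (sinhDiv (x i - x j) (a k)) -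
      Real.log (sinhDiv (x i - x j) (b k))) := by
  set f : ℝ → ℝ := fun t => ∑ i, ∑ j, -(c i * c j) * Real.log (sinhDiv (x i - x j) t) with hf
  set f₁ : ℝ → ℝ := fun t => ∑ i, ∑ j,
    -(c i * c j) * (Real.cosh (t * (x i - x j)) / sinhDiv (x i - x j) t) with hf₁
  set f₂ : ℝ → ℝ := fun t => ∑ i, ∑ j,
    -(c i * c j) * (-((sinhDiv (x i - x j) t)⁻¹ * (sinhDiv (x i - x j) t)⁻¹)) with hf₂
  have h1 (t : ℝ) (ht : 0 < t) : HasDerivAt f (f₁ t) t :=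
    HasDerivAt.fun_sum fun i _ => HasDerivAt.fun_sum fun j _ =>
      (hasDerivAt_log_sinhDiv _ ht).const_mul _
  have h2 (t : ℝ) (ht : 0 < t) : HasDerivAt f₁ (f₂ t) t :=
    HasDerivAt.fun_sum fun i _ => HasDerivAt.fun_sum fun j _ =>
      (hasDerivAt_cosh_div_sinhDiv _ ht).const_mul _
  have h3 (t : ℝ) (ht : 0 < t) : 0 ≤ f₂ t := by
    have := (posSemidef_iff_sum_nonneg.1
      ((posSemidef_inv_sinhDiv x ht).hadamard (posSemidef_inv_sinhDiv x ht))).2 c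
    simpa only [hf₂, neg_mul_neg, Matrix.hadamard_apply, Matrix.of_apply] using this
  have hmono : MonotoneOn f₁ (Set.Ioi 0) := by
    refine monotoneOn_of_hasDerivWithinAt_nonneg (convex_Ioi 0)
      (fun t ht => (h2 t ht).continuousAt.continuousWithinAt) (f' := f₂) ?_ ?_
    · simp only [interior_Ioi]
      exact fun t ht => (h2 t ht).hasDerivWithinAt
    · simp only [interior_Ioi]
      exact h3
  have hcc : ∑ i, ∑ j, -(c i * c j) = 0 := by
    simp only [Finset.sum_neg_distrib, ← Finset.mul_sum, hc, mul_zero, Finset.sum_const_zero,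
      neg_zero]
  have hlim : Tendsto f₁ (𝓝[>] 0) (𝓝 0) := by
    have : Tendsto (fun t => ∑ i, ∑ j, -(c i * c j) *
        (Real.cosh (t * (x i - x j)) / sinhDiv (x i - x j) t - t⁻¹)) (𝓝[>] 0)
        (𝓝 (∑ i, ∑ j, -(c i * c j) * 0)) :=
      tendsto_finsetSum _ fun i _ => tendsto_finsetSum _ fun j _ =>
        (tendsto_cosh_div_sinhDiv_sub _).const_mul _
    simp only [mul_zero, Finset.sum_const_zero] at this
    refine this.congr fun t => ?_
    simp only [mul_sub, Finset.sum_sub_distrib, ← Finset.sum_mul, hcc, zero_mul, sub_zero, hf₁]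
  have hnonneg (t : ℝ) (ht : 0 < t) : 0 ≤ f₁ t := by
    refine le_of_tendsto hlim ?_
    filter_upwards [Ioo_mem_nhdsGT ht] with s hs
    exact hmono hs.1 ht hs.2.le
  have := hab.sum_le_sum ha hb h1 hmono hnonneg
  rw [← sub_nonneg, ← Finset.sum_sub_distrib] at this
  refine this.trans_eq ?_
  simp only [hf, ← Finset.sum_sub_distrib, Finset.mul_sum]
  rw [Finset.sum_comm]
  refine Finset.sum_congr rfl fun i _ => ?_
  rw [Finset.sum_comm]
  exact Finset.sum_congr rfl fun j _ => Finset.sum_congr rfl fun k _ => by ring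

/-- One direction of **Schoenberg's theorem**. -/
theorem posSemidef_exp_of_conditionally {ι : Type*} [Fintype ι] (K : ℝ → ℝ)
    (heven : ∀ t, K (-t) = K t)
    (hK : ∀ y c : Option ι → ℝ, ∑ i, c i = 0 → 0 ≤ ∑ i, ∑ j, c i * c j * K (y i - y j))
    (x : ι → ℝ) : (Matrix.of fun i j => Real.exp (K (x i - x j))).PosSemidef := by
  have hL : (Matrix.of fun i j => K (x i - x j) - K (x i) - K (x j) + K 0).PosSemidef := by
    refine posSemidef_iff_sum_nonneg.2 ⟨fun i j => ?_, fun c => ?_⟩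
    · simp only [Matrix.of_apply, ← heven (x i - x j), neg_sub]
      ring
    · refine (hK (fun o => o.elim 0 x) (fun o => o.elim (-∑ i, c i) c)
        (by simp [Fintype.sum_option])).trans_eq ?_
      simp only [Fintype.sum_option, Option.elim, sub_zero, zero_sub, heven, Matrix.of_apply,
        mul_add, mul_sub, Finset.sum_add_distrib, Finset.sum_sub_distrib]
      have e1 : ∑ i, ∑ j, c i * c j * K (x i) = (∑ i, c i * K (x i)) * ∑ j, c j := by
        rw [Finset.sum_mul_sum]
        exact Finset.sum_congr rfl fun i _ => Finset.sum_congr rfl fun j _ => by ring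
      have e2 : ∑ i, ∑ j, c i * c j * K (x j) = (∑ i, c i * K (x i)) * ∑ j, c j := by
        rw [mul_comm, Finset.sum_mul_sum]
        exact Finset.sum_congr rfl fun i _ => Finset.sum_congr rfl fun j _ => by ring
      have e3 : ∑ i, ∑ j, c i * c j * K 0 = (∑ i, c i) * (∑ i, c i) * K 0 := by
        rw [Finset.sum_mul_sum]
        simp only [Finset.sum_mul]
      have e4 : ∑ i, c i * -(∑ j, c j) * K (x i) = -((∑ i, c i * K (x i)) * ∑ j, c j) := by
        generalize ∑ j, c j = s
        rw [Finset.sum_mul, ← Finset.sum_neg_distrib]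
        exact Finset.sum_congr rfl fun i _ => by ring
      have e5 : ∑ i, -(∑ j, c j) * c i * K (x i) = -((∑ i, c i * K (x i)) * ∑ j, c j) := by
        rw [← e4]
        exact Finset.sum_congr rfl fun i _ => by ring
      rw [e1, e2, e3, e4, e5]
      ring
  have hE := posSemidef_iff_sum_nonneg.1 (posSemidef_entrywise_exp hL)
  refine posSemidef_iff_sum_nonneg.2 ⟨fun i j => ?_, fun c => ?_⟩
  · simp only [Matrix.of_apply, ← heven (x i - x j), neg_sub]
  · have := mul_nonneg (Real.exp_pos (-K 0)).le (hE.2 fun i => c i * Real.exp (K (x i)))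
    refine this.trans_eq ?_
    simp only [Finset.mul_sum, Matrix.of_apply]
    refine Finset.sum_congr rfl fun i _ => Finset.sum_congr rfl fun j _ => ?_
    have : Real.exp (K (x i - x j)) = Real.exp (-K 0) * Real.exp (K (x i)) *
        Real.exp (K (x j)) * Real.exp (K (x i - x j) - K (x i) - K (x j) + K 0) := by
      simp only [← Real.exp_add]
      ring_nf
    rw [this]
    ring

theorem isPosDefFun_ofReal {φ : ℝ → ℝ}
    (hφ : ∀ (n : ℕ) (x : Fin n → ℝ), (Matrix.of fun i j => φ (x i - x j)).PosSemidef) :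
    IsPosDefFun fun t => (φ t : ℂ) := by
  intro n x c
  have h := posSemidef_iff_sum_nonneg.1 (hφ n x)
  simp only [Matrix.of_apply] at h
  rw [Complex.nonneg_iff]
  constructor
  · refine (add_nonneg (h.2 fun i => (c i).re) (h.2 fun i => (c i).im)).trans_eq ?_
    simp only [Complex.re_sum, ← Finset.sum_add_distrib]
    refine Finset.sum_congr rfl fun i _ => Finset.sum_congr rfl fun j _ => ?_
    simp
    ring
  · simp only [Complex.im_sum]
    have key : ∑ i, ∑ j, (c i).im * (c j).re * φ (x i - x j) =
        ∑ i, ∑ j, (c i).re * (c j).im * φ (x i - x j) := by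
      rw [Finset.sum_comm]
      refine Finset.sum_congr rfl fun i _ => Finset.sum_congr rfl fun j _ => ?_
      rw [h.1 i j]
      ring
    rw [eq_comm, ← sub_eq_zero.2 key, ← Finset.sum_sub_distrib]
    refine Finset.sum_congr rfl fun i _ => ?_
    rw [← Finset.sum_sub_distrib]
    refine Finset.sum_congr rfl fun j _ => ?_
    simp
    ring

theorem sinhProd_eq_prod_sinhDiv {n : ℕ} (a b : Fin n → ℝ) (d : ℝ) :
    sinhProd a b d = ∏ k, sinhDiv d (a k) / sinhDiv d (b k) := by
  simp only [sinhProd, sinhDiv]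
  split_ifs with h
  · rfl
  · exact Finset.prod_congr rfl fun k _ => (div_div_div_cancel_right₀ h _ _).symm

theorem sinhProd_infdiv_of_weak_submajorization {n : ℕ} (a b : Fin n → ℝ)
    (ha : ∀ i, 0 < a i) (hb : ∀ i, 0 < b i)
    (hmaj : IsWeaklySubmajorizedBy a b) :
    IsInfDivFun (sinhProd a b) := by
  intro r hr
  refine isPosDefFun_ofReal fun m x => ?_
  set K : ℝ → ℝ := fun d =>
    r * ∑ k, (Real.log (sinhDiv d (a k)) - Real.log (sinhDiv d (b k))) with hK
  have hexp (d : ℝ) : sinhProd a b d ^ r = Real.exp (K d) := by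
    have hpos (k : Fin n) : 0 < sinhDiv d (a k) / sinhDiv d (b k) :=
      div_pos (sinhDiv_pos d (ha k)) (sinhDiv_pos d (hb k))
    rw [sinhProd_eq_prod_sinhDiv, Real.rpow_def_of_pos (Finset.prod_pos fun k _ => hpos k),
      Real.log_prod fun k _ => (hpos k).ne', mul_comm]
    simp only [hK, Real.log_div (sinhDiv_pos d (ha _)).ne' (sinhDiv_pos d (hb _)).ne']
  simp only [hexp]
  refine posSemidef_exp_of_conditionally K (fun t => by simp only [hK, sinhDiv_neg])
    (fun y c hc => ?_) x
  refine (mul_nonneg hr.le (sum_sum_mul_log_sinhDiv_nonneg y c hc ha hb hmaj)).trans_eq ?_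
  simp only [hK, Finset.mul_sum]
  exact Finset.sum_congr rfl fun i _ => Finset.sum_congr rfl fun j _ =>
    Finset.sum_congr rfl fun k _ => by ring
end

section
/- Let a_1 ≥ a_2 > 0 and b_1 ≥ b_2 > 0. Then the function x ↦ (sinh(a_1·x)·sinh(a_2·x))/(sinh(b_1·x)·sinh(b_2·x)) (extended by continuity at x = 0) is positive definite if and only if a_1 ≤ b_1 and a_1 + a_2 ≤ b_1 + b_2. -/
open scoped ComplexOrder

open Filter Topology

namespace IsPosDefFun

lemma map_neg {φ : ℝ → ℂ} (h : IsPosDefFun φ) (x : ℝ) :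
    φ (-x) = (starRingEnd ℂ) (φ x) := by
  have h0 := h 1 ![0] ![1]
  have h1 := h 2 ![x, 0] ![1, 1]
  have h2 := h 2 ![x, 0] ![1, Complex.I]
  simp [Fin.sum_univ_two, Complex.le_def] at h0 h1 h2
  apply Complex.ext <;> simp <;> linarith [h0.2, h1.2, h2.2]

lemma posSemidef {φ : ℝ → ℂ} (h : IsPosDefFun φ) {n : ℕ} (x : Fin n → ℝ) :
    (Matrix.of fun i j => φ (x i - x j)).PosSemidef := by
  refine Matrix.PosSemidef.of_dotProduct_mulVec_nonneg ?_ fun c => ?_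
  · ext i j
    rw [Matrix.conjTranspose_apply, Matrix.of_apply, Matrix.of_apply, ← neg_sub, h.map_neg]
    simp
  · convert h n x (star c) using 1
    simp only [dotProduct, Matrix.mulVec, Finset.mul_sum, Matrix.of_apply]
    refine Finset.sum_congr rfl fun i _ => Finset.sum_congr rfl fun j _ => ?_
    simp
    ring

lemma of_posSemidef {φ : ℝ → ℂ}
    (h : ∀ (n : ℕ) (x : Fin n → ℝ), (Matrix.of fun i j => φ (x i - x j)).PosSemidef) :
    IsPosDefFun φ := by
  intro n x c
  convert (h n x).dotProduct_mulVec_nonneg (star c) using 1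
  simp only [dotProduct, Matrix.mulVec, Finset.mul_sum, Matrix.of_apply]
  refine Finset.sum_congr rfl fun i _ => Finset.sum_congr rfl fun j _ => ?_
  simp
  ring

lemma mul {φ ψ : ℝ → ℂ} (hφ : IsPosDefFun φ) (hψ : IsPosDefFun ψ) :
    IsPosDefFun fun x => φ x * ψ x :=
  of_posSemidef fun _ x => (hφ.posSemidef x).hadamard (hψ.posSemidef x)

lemma add {φ ψ : ℝ → ℂ} (hφ : IsPosDefFun φ) (hψ : IsPosDefFun ψ) :
    IsPosDefFun fun x => φ x + ψ x :=
  of_posSemidef fun _ x => (hφ.posSemidef x).add (hψ.posSemidef x)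

lemma of_tendsto {ι : Type*} {l : Filter ι} [l.NeBot] {F : ι → ℝ → ℂ} {φ : ℝ → ℂ}
    (hF : ∀ᶠ k in l, IsPosDefFun (F k)) (hlim : ∀ x, Tendsto (fun k => F k x) l (𝓝 (φ x))) :
    IsPosDefFun φ := by
  intro n x c
  refine ge_of_tendsto (tendsto_finsetSum _ fun i _ => tendsto_finsetSum _ fun j _ =>
    (hlim (x i - x j)).const_mul (c i * (starRingEnd ℂ) (c j))) ?_
  filter_upwards [hF] with k hk using hk n x c

lemma const {r : ℝ} (hr : 0 ≤ r) : IsPosDefFun fun _ => (r : ℂ) := by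
  intro n x c
  have : ∑ i, ∑ j, c i * (starRingEnd ℂ) (c j) * (r : ℂ)
      = ((r * Complex.normSq (∑ i, c i) : ℝ) : ℂ) := by
    rw [Complex.ofReal_mul, ← Complex.mul_conj, map_sum, Finset.sum_mul_sum, Finset.mul_sum]
    refine Finset.sum_congr rfl fun i _ => ?_
    rw [Finset.mul_sum]
    exact Finset.sum_congr rfl fun j _ => by ring
  rw [this]
  exact_mod_cast mul_nonneg hr (Complex.normSq_nonneg _)

lemma prod {ι : Type*} {F : ι → ℝ → ℂ} (s : Finset ι) (hF : ∀ k ∈ s, IsPosDefFun (F k)) :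
    IsPosDefFun fun x => ∏ k ∈ s, F k x := by
  classical
  induction s using Finset.induction_on with
  | empty => simpa using const (r := 1) zero_le_one
  | insert k s hk ih =>
    simp only [Finset.prod_insert hk]
    exact (hF k (s.mem_insert_self k)).mul (ih fun j hj => hF j (Finset.mem_insert_of_mem hj))

lemma exp_mul_I (t : ℝ) : IsPosDefFun fun x => Complex.exp (t * x * Complex.I) := by
  intro n x c
  have : ∑ i, ∑ j, c i * (starRingEnd ℂ) (c j) *
      Complex.exp (t * ((x i - x j : ℝ) : ℂ) * Complex.I)
      = ((Complex.normSq (∑ i, c i * Complex.exp (t * x i * Complex.I)) : ℝ) : ℂ) := by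
    rw [← Complex.mul_conj, map_sum, Finset.sum_mul_sum]
    refine Finset.sum_congr rfl fun i _ => Finset.sum_congr rfl fun j _ => ?_
    rw [map_mul, ← Complex.exp_conj, mul_mul_mul_comm, ← Complex.exp_add]
    congr 2
    simp
    ring
  rw [this]
  exact_mod_cast Complex.normSq_nonneg _

open MeasureTheory in
lemma inv_one_add_mul_I (u : ℝ) : IsPosDefFun fun x => (1 + u * x * Complex.I)⁻¹ := by
  have hre (x : ℝ) : (-(1 + u * x * Complex.I)).re < 0 := by simp
  have hint (x : ℝ) : (1 + u * x * Complex.I)⁻¹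
      = ∫ s : ℝ in Set.Ioi 0, Complex.exp (-(1 + u * x * Complex.I) * s) := by
    rw [integral_exp_mul_complex_Ioi (hre x)]
    rw [Complex.ofReal_zero, mul_zero, Complex.exp_zero, neg_div_neg_eq, one_div]
  intro n x c
  simp only [hint]
  have hi (i j : Fin n) : IntegrableOn (fun s : ℝ => c i * (starRingEnd ℂ) (c j) *
      Complex.exp (-(1 + u * ((x i - x j : ℝ) : ℂ) * Complex.I) * s)) (Set.Ioi 0) :=
    (integrableOn_exp_mul_complex_Ioi (hre _) 0).const_mul _
  simp only [← integral_const_mul]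
  simp only [← integral_finsetSum _ fun j _ => hi _ j]
  rw [← integral_finsetSum _ fun i _ => integrable_finsetSum _ fun j _ => hi i j]
  refine integral_nonneg fun s => ?_
  rw [Pi.zero_apply]
  convert ((const (Real.exp_nonneg (-s))).mul (exp_mul_I (-s * u))) n x c using 6
  beta_reduce
  rw [Complex.ofReal_exp, ← Complex.exp_add]
  congr 1
  push_cast
  ring

lemma inv_one_add_sq (u : ℝ) : IsPosDefFun fun x => (((1 + u ^ 2 * x ^ 2)⁻¹ : ℝ) : ℂ) := by
  convert (inv_one_add_mul_I u).mul (inv_one_add_mul_I (-u)) using 2 with x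
  rw [← mul_inv]
  push_cast
  congr 1
  linear_combination ((u : ℂ) ^ 2 * x ^ 2) * Complex.I_sq

lemma one_add_sq_div {u v : ℝ} (hu : 0 ≤ u) (hv : 0 < v) (huv : u ≤ v) :
    IsPosDefFun fun x => (((1 + u ^ 2 * x ^ 2) / (1 + v ^ 2 * x ^ 2) : ℝ) : ℂ) := by
  have hle : u ^ 2 / v ^ 2 ≤ 1 := (div_le_one (by positivity)).2 (by gcongr)
  convert (const (r := u ^ 2 / v ^ 2) (by positivity)).add
    ((const (sub_nonneg.2 hle)).mul (inv_one_add_sq v)) using 2 with x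
  norm_cast
  have : 1 + v ^ 2 * x ^ 2 ≠ 0 := by positivity
  field_simp
  ring

end IsPosDefFun

/-- The function `x ↦ sinh (a x) / sinh (b x)`, extended by continuity at `0`. -/
noncomputable def sinhRatio (a b x : ℝ) : ℝ :=
  if x = 0 then a / b else Real.sinh (a * x) / Real.sinh (b * x)

lemma tendsto_sinh_prod (x : ℝ) :
    Tendsto (fun n : ℕ => x * ∏ j ∈ Finset.range n,
      (1 + (1 / (Real.pi * (j + 1))) ^ 2 * x ^ 2)) atTop (𝓝 (Real.sinh x)) := by
  have h := (Complex.tendsto_euler_sin_prod (x * Complex.I / Real.pi)).mul_const (-Complex.I)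
  have hpi : (Real.pi : ℂ) ≠ 0 := Complex.ofReal_ne_zero.2 Real.pi_ne_zero
  rw [mul_div_cancel₀ _ hpi, Complex.sin_mul_I] at h
  have h2 := (Complex.continuous_re.tendsto _).comp h
  convert h2 using 1
  · ext n
    rw [Function.comp_apply, ← Complex.ofReal_re (x * _)]
    congr 1
    push_cast
    have (P : ℂ) : (x * Complex.I * P) * -Complex.I = x * P := by
      linear_combination (-x * P) * Complex.I_sq
    rw [this]
    congr 1
    refine Finset.prod_congr rfl fun j _ => ?_
    rw [one_div, mul_inv, div_eq_mul_inv (_ ^ 2), div_eq_mul_inv, ← inv_pow]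
    linear_combination (x ^ 2 * (Real.pi : ℂ)⁻¹ ^ 2 * ((j : ℂ) + 1)⁻¹ ^ 2) * Complex.I_sq
  · rw [← Complex.ofReal_re (Real.sinh x)]
    congr 2
    push_cast
    linear_combination (Complex.sinh x) * Complex.I_sq

lemma isPosDefFun_sinhRatio {a b : ℝ} (ha : 0 ≤ a) (hb : 0 < b) (hab : a ≤ b) :
    IsPosDefFun fun x => (sinhRatio a b x : ℂ) := by
  have hc (j : ℕ) : 0 < 1 / (Real.pi * (j + 1)) := by positivity
  refine IsPosDefFun.of_tendsto (l := atTop) (F := fun (n : ℕ) x => ((a / b : ℝ) : ℂ) *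
    ∏ j ∈ Finset.range n, (((1 + (1 / (Real.pi * (j + 1)) * a) ^ 2 * x ^ 2) /
      (1 + (1 / (Real.pi * (j + 1)) * b) ^ 2 * x ^ 2) : ℝ) : ℂ)) ?_ fun x => ?_
  · refine Eventually.of_forall fun n => (IsPosDefFun.const (by positivity)).mul
      (IsPosDefFun.prod _ fun j _ => IsPosDefFun.one_add_sq_div ?_ ?_ ?_)
    · have := hc j; positivity
    · have := hc j; positivity
    · have := hc j; gcongr
  · by_cases hx : x = 0
    · simp [sinhRatio, hx]
    · have hs : Real.sinh (b * x) ≠ 0 := by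
        rw [Ne, Real.sinh_eq_zero]
        exact mul_ne_zero hb.ne' hx
      have h := (Complex.continuous_ofReal.tendsto _).comp
        ((tendsto_sinh_prod (a * x)).div (tendsto_sinh_prod (b * x)) hs)
      simp only [sinhRatio, hx, if_false]
      refine h.congr fun n => ?_
      rw [Function.comp_apply]
      norm_cast
      rw [Pi.div_apply, mul_div_mul_comm, ← Finset.prod_div_distrib, mul_div_mul_right _ _ hx]
      congr 1
      refine Finset.prod_congr rfl fun j _ => ?_
      congr 2 <;> ring

lemma sinhRatio_mul_sinhRatio {a b c : ℝ} (hb : b ≠ 0) (x : ℝ) :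
    sinhRatio a b x * sinhRatio b c x = sinhRatio a c x := by
  by_cases hx : x = 0
  · simp [sinhRatio, hx, div_mul_div_cancel₀ hb]
  · have hs : Real.sinh (b * x) ≠ 0 := by
      rw [Ne, Real.sinh_eq_zero]
      exact mul_ne_zero hb hx
    simp [sinhRatio, hx, div_mul_div_cancel₀ hs]

lemma sinhRatio_mul_eq_one_add {a b c : ℝ} (hc : c ≠ 0) (h : a + b - c ≠ 0) (x : ℝ) :
    sinhRatio a (a + b - c) x * sinhRatio b c x
      = 1 + sinhRatio (a - c) (a + b - c) x * sinhRatio (b - c) c x := by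
  by_cases hx : x = 0
  · simp only [sinhRatio, hx, if_true]
    field_simp
    ring
  · have h1 : Real.sinh (c * x) ≠ 0 := by
      rw [Ne, Real.sinh_eq_zero]
      exact mul_ne_zero hc hx
    have h2 : Real.sinh ((a + b - c) * x) ≠ 0 := by
      rw [Ne, Real.sinh_eq_zero]
      exact mul_ne_zero h hx
    simp only [sinhRatio, hx, if_false]
    rw [div_mul_div_comm, div_mul_div_comm, div_eq_iff (mul_ne_zero h2 h1), add_mul, one_mul,
      div_mul_cancel₀ _ (mul_ne_zero h2 h1)]
    simp only [sub_mul, add_mul, Real.sinh_sub, Real.sinh_add, Real.cosh_add]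
    linear_combination (-Real.sinh (a * x) * Real.sinh (b * x)) * Real.cosh_sq (c * x)

lemma isPosDefFun_sinhRatio_mul_of_le_nsmul {c : ℝ} (hc : 0 < c) (n : ℕ) {a b : ℝ} (hcb : c ≤ b)
    (hba : b ≤ a) (hbn : b ≤ n * c) :
    IsPosDefFun fun x => (sinhRatio a (a + b - c) x : ℂ) * (sinhRatio b c x : ℂ) := by
  induction n generalizing a b with
  | zero => simp only [Nat.cast_zero, zero_mul] at hbn; linarith
  | succ n ih =>
    have hd : 0 < a + b - c := by linarith
    suffices h : IsPosDefFun fun x =>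
        (sinhRatio (a - c) (a + b - c) x : ℂ) * (sinhRatio (b - c) c x : ℂ) by
      convert (IsPosDefFun.const zero_le_one).add h using 2 with x
      exact_mod_cast sinhRatio_mul_eq_one_add hc.ne' hd.ne' x
    rcases le_total (b - c) c with hb | hb
    · exact (isPosDefFun_sinhRatio (by linarith) hd (by linarith)).mul
        (isPosDefFun_sinhRatio (by linarith) hc hb)
    · have hd' : 0 < a - c + (b - c) - c := by linarith
      push_cast at hbn
      convert (ih hb (by linarith : b - c ≤ a - c) (by linarith)).mul
        (isPosDefFun_sinhRatio hd'.le hd (by linarith)) using 2 with x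
      rw [mul_right_comm, ← sinhRatio_mul_sinhRatio hd'.ne']
      push_cast
      ring

lemma isPosDefFun_sinhRatio_mul {a₁ a₂ b₁ b₂ : ℝ} (ha : a₂ ≤ a₁) (ha₂ : 0 < a₂) (hb : b₂ ≤ b₁)
    (hb₂ : 0 < b₂) (h₁ : a₁ ≤ b₁) (h₂ : a₁ + a₂ ≤ b₁ + b₂) :
    IsPosDefFun fun x => (sinhRatio a₁ b₁ x : ℂ) * (sinhRatio a₂ b₂ x : ℂ) := by
  rcases le_total a₂ b₂ with h | h
  · exact (isPosDefFun_sinhRatio (by linarith) (by linarith) h₁).mul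
      (isPosDefFun_sinhRatio ha₂.le hb₂ h)
  · obtain ⟨n, hn⟩ := exists_nat_ge (a₂ / b₂)
    have hd : 0 < a₁ + a₂ - b₂ := by linarith
    convert (isPosDefFun_sinhRatio_mul_of_le_nsmul hb₂ n h ha ((div_le_iff₀ hb₂).1 hn)).mul
      (isPosDefFun_sinhRatio hd.le (hb₂.trans_le hb) (by linarith)) using 2 with x
    rw [mul_right_comm, ← sinhRatio_mul_sinhRatio hd.ne']
    push_cast
    ring

namespace IsPosDefFun

lemma re_le {φ : ℝ → ℂ} (h : IsPosDefFun φ) (x : ℝ) : (φ x).re ≤ (φ 0).re := by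
  have h1 := h 2 ![x, 0] ![1, -1]
  simp [Fin.sum_univ_two, Complex.le_def, h.map_neg] at h1
  linarith [h1.1]

lemma second_diff {φ : ℝ → ℂ} (h : IsPosDefFun φ) (t : ℝ) :
    IsPosDefFun fun x => 2 * φ x - φ (x + t) - φ (x - t) := by
  intro n x c
  convert h (n + n) (Fin.append x fun i => x i + t) (Fin.append c (-c)) using 1
  simp only [Fin.sum_univ_add, Fin.append_left, Fin.append_right, ← Finset.sum_add_distrib]
  refine Finset.sum_congr rfl fun i _ => Finset.sum_congr rfl fun j _ => ?_
  rw [show x i - (x j + t) = x i - x j - t by ring, show x i + t - x j = x i - x j + t by ring,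
    add_sub_add_right_eq_sub]
  simp
  ring

end IsPosDefFun

open Asymptotics in
lemma AnalyticAt.tendsto_second_diff {G : ℂ → ℂ} {z : ℂ} (hG : AnalyticAt ℂ G z) :
    Tendsto (fun t : ℝ => (G (z + t) + G (z - t) - 2 * G z) / (t : ℂ) ^ 2) (𝓝[≠] 0)
      (𝓝 (deriv (deriv G) z)) := by
  have h := hG.hasFPowerSeriesAt.isBigO_sub_partialSum_pow 3
  have h1 : Tendsto (fun t : ℝ => (t : ℂ)) (𝓝[≠] 0) (𝓝 0) :=
    (by simpa using Complex.continuous_ofReal.tendsto 0 :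
      Tendsto (fun t : ℝ => (t : ℂ)) (𝓝 0) (𝓝 0)).mono_left nhdsWithin_le_nhds
  have h2 : Tendsto (fun t : ℝ => -(t : ℂ)) (𝓝[≠] 0) (𝓝 0) := by simpa using h1.neg
  have h3 : (fun t : ℝ => ‖(t : ℂ)‖ ^ 3) =o[𝓝[≠] 0] fun t : ℝ => (t : ℂ) ^ 2 := by
    refine IsLittleO.of_norm_norm ?_
    simpa using ((isLittleO_pow_pow (𝕜 := ℝ) (by norm_num : 2 < 3)).mono
      nhdsWithin_le_nhds).norm_norm
  have h4 := ((h.comp_tendsto h1).trans_isLittleO h3).add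
    ((h.comp_tendsto h2).trans_isLittleO (by simpa [Function.comp_def] using h3))
  have h5 := (h4.tendsto_div_nhds_zero).add_const (deriv (deriv G) z)
  rw [zero_add] at h5
  refine h5.congr' ?_
  filter_upwards [self_mem_nhdsWithin] with t ht
  have ht' : (t : ℂ) ≠ 0 := Complex.ofReal_ne_zero.2 ht
  simp only [Function.comp_apply, FormalMultilinearSeries.partialSum, Finset.sum_range_succ,
    Finset.sum_range_zero, FormalMultilinearSeries.ofScalars_apply_eq, iteratedDeriv_succ,
    iteratedDeriv_zero, ← sub_eq_add_neg]
  simp [Nat.factorial]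
  field_simp
  ring

lemma IsPosDefFun.neg_deriv_deriv {G : ℂ → ℂ} (h : IsPosDefFun fun x => G x)
    (hG : ∀ x : ℝ, AnalyticAt ℂ G x) : IsPosDefFun fun x => -deriv (deriv G) x := by
  refine of_tendsto (l := 𝓝[≠] (0 : ℝ)) (F := fun t x => ((1 / t ^ 2 : ℝ) : ℂ) *
    (2 * G (x : ℂ) - G ((x + t : ℝ) : ℂ) - G ((x - t : ℝ) : ℂ)))
    (Eventually.of_forall fun t => (const (by positivity)).mul (h.second_diff t)) fun x => ?_
  refine (hG x).tendsto_second_diff.neg.congr fun t => ?_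
  push_cast
  ring

lemma IsPosDefFun.iteratedDeriv_nonneg {G : ℂ → ℂ} {U : Set ℂ} (hU : IsOpen U)
    (hRU : ∀ x : ℝ, (x : ℂ) ∈ U) (hG : DifferentiableOn ℂ G U) (h : IsPosDefFun fun x => G x)
    (n : ℕ) : 0 ≤ (-1) ^ n * iteratedDeriv (2 * n) G 0 := by
  induction n generalizing G with
  | zero => simpa using h 1 ![0] ![1]
  | succ n ih =>
    have h2 := ih (((hG.deriv hU).deriv hU).neg)
      (h.neg_deriv_deriv fun x => hG.analyticAt (hU.mem_nhds (hRU x)))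
    rw [show 2 * (n + 1) = 2 * n + 1 + 1 by ring, iteratedDeriv_succ', iteratedDeriv_succ']
    rw [iteratedDeriv_neg] at h2
    convert h2 using 1
    ring

lemma IsPosDefFun.re_zero_le_re_mul_I {G : ℂ → ℂ} {r : ℝ}
    (hG : DifferentiableOn ℂ G {z | |z.im| < r}) (h : IsPosDefFun fun x => G x)
    (heven : ∀ z, G (-z) = G z) {y : ℝ} (hy : |y| < r) :
    (G 0).re ≤ (G (y * Complex.I)).re := by
  have hr : 0 < r := (abs_nonneg y).trans_lt hy
  have hU : IsOpen {z : ℂ | |z.im| < r} :=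
    isOpen_lt (continuous_abs.comp Complex.continuous_im) continuous_const
  have hball : Metric.ball (0 : ℂ) r ⊆ {z : ℂ | |z.im| < r} := fun z hz =>
    (Complex.abs_im_le_norm z).trans_lt (by simpa using hz)
  have hs := Complex.hasSum_re (Complex.hasSum_taylorSeries_on_ball (hG.mono hball)
    (show (y : ℂ) * Complex.I ∈ Metric.ball 0 r by simpa using hy))
  refine le_trans (by simp) (le_hasSum hs 0 fun n _ => ?_)
  rcases Nat.even_or_odd' n with ⟨k, rfl | rfl⟩
  · have hk := (Complex.le_def.1 (h.iteratedDeriv_nonneg hU (fun x => by simpa using hr) hG k)).1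
    have : ((2 * k).factorial : ℂ)⁻¹ • ((y : ℂ) * Complex.I - 0) ^ (2 * k) •
        iteratedDeriv (2 * k) G 0 = ((((2 * k).factorial : ℝ)⁻¹ * (y ^ 2) ^ k : ℝ) : ℂ) *
          ((-1) ^ k * iteratedDeriv (2 * k) G 0) := by
      rw [sub_zero, mul_pow, pow_mul Complex.I, Complex.I_sq, smul_eq_mul, smul_eq_mul]
      push_cast
      ring
    rw [this, Complex.re_ofReal_mul]
    exact mul_nonneg (by positivity) hk
  · have hodd := iteratedDeriv_comp_neg (2 * k + 1) G 0
    simp only [heven, neg_zero] at hodd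
    rw [Odd.neg_one_pow ⟨k, rfl⟩, neg_one_smul, self_eq_neg] at hodd
    simp [hodd]

/-- The entire function `z ↦ sinh z / z`. -/
noncomputable def sinhc (z : ℂ) : ℂ := dslope Complex.sinh 0 z

lemma sinhc_zero : sinhc 0 = 1 := by simp [sinhc, Complex.deriv_sinh]

lemma sinhc_of_ne_zero {z : ℂ} (hz : z ≠ 0) : sinhc z = Complex.sinh z / z := by
  simp [sinhc, dslope_of_ne _ hz, slope, div_eq_inv_mul]

lemma sinhc_neg (z : ℂ) : sinhc (-z) = sinhc z := by
  by_cases hz : z = 0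
  · simp [hz]
  · rw [sinhc_of_ne_zero hz, sinhc_of_ne_zero (neg_ne_zero.2 hz), Complex.sinh_neg, neg_div_neg_eq]

lemma differentiable_sinhc : Differentiable ℂ sinhc :=
  differentiableOn_univ.1 ((Complex.differentiableOn_dslope univ_mem).2
    Complex.differentiable_sinh.differentiableOn)

lemma sinhc_pi_mul_I : sinhc (Real.pi * Complex.I) = 0 := by
  have : (Real.pi : ℂ) * Complex.I ≠ 0 :=
    mul_ne_zero (Complex.ofReal_ne_zero.2 Real.pi_ne_zero) Complex.I_ne_zero
  rw [sinhc_of_ne_zero this, Complex.sinh_mul_I]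
  simp

lemma sinhc_ne_zero {z : ℂ} (hz : |z.im| < Real.pi) : sinhc z ≠ 0 := by
  by_cases h0 : z = 0
  · simp [h0, sinhc_zero]
  · rw [sinhc_of_ne_zero h0]
    refine div_ne_zero (fun h => h0 ?_) h0
    have h1 : Complex.sin (z * Complex.I) = 0 := by rw [Complex.sin_mul_I, h, zero_mul]
    obtain ⟨k, hk⟩ := Complex.sin_eq_zero_iff.1 h1
    have him : z.im = -k * Real.pi := by
      have := congrArg Complex.re hk
      simp at this
      linarith
    have hk0 : k = 0 := by
      rw [him, abs_mul, abs_of_pos Real.pi_pos, mul_lt_iff_lt_one_left Real.pi_pos, abs_neg] at hz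
      exact Int.abs_lt_one_iff.1 (by exact_mod_cast hz)
    simpa [hk0] using hk

lemma mul_sinhc_mul_mul {a : ℝ} (ha : a ≠ 0) {x : ℝ} (hx : x ≠ 0) :
    a * sinhc (a * x) = ((Real.sinh (a * x) / x : ℝ) : ℂ) := by
  have ha' : (a : ℂ) ≠ 0 := Complex.ofReal_ne_zero.2 ha
  have hx' : (x : ℂ) ≠ 0 := Complex.ofReal_ne_zero.2 hx
  rw [sinhc_of_ne_zero (mul_ne_zero ha' hx')]
  push_cast
  field_simp

lemma add_le_add_of_sinh_mul_sinh_le {a₁ a₂ b₁ b₂ C : ℝ} (ha₁ : 0 < a₁) (ha₂ : 0 < a₂)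
    (hb₁ : 0 < b₁) (hb₂ : 0 < b₂)
    (h : ∀ x > 0, Real.sinh (a₁ * x) * Real.sinh (a₂ * x) ≤
      C * (Real.sinh (b₁ * x) * Real.sinh (b₂ * x))) : a₁ + a₂ ≤ b₁ + b₂ := by
  by_contra! hlt
  have lower {a x : ℝ} (hx : 1 / a ≤ x) (ha : 0 < a) :
      Real.exp (a * x) / 4 ≤ Real.sinh (a * x) := by
    have h1 : 1 ≤ a * x := by rwa [div_le_iff₀' ha] at hx
    have h2 := Real.add_one_le_exp (a * x)
    have h3 : Real.exp (-(a * x)) ≤ 1 := Real.exp_le_one_iff.2 (by linarith)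
    rw [Real.sinh_eq]
    linarith
  have upper (y : ℝ) : Real.sinh y ≤ Real.exp y := by
    rw [Real.sinh_eq]
    linarith [Real.exp_pos y, Real.exp_pos (-y)]
  have htend : Tendsto (fun x => Real.exp ((a₁ + a₂ - (b₁ + b₂)) * x)) atTop atTop :=
    Real.tendsto_exp_atTop.comp (tendsto_id.const_mul_atTop (sub_pos.2 hlt))
  obtain ⟨x, hx, hx₁, hx₂, hx0⟩ := ((htend.eventually_gt_atTop (16 * |C|)).and
    ((eventually_ge_atTop (1 / a₁)).and
      ((eventually_ge_atTop (1 / a₂)).and (eventually_gt_atTop 0)))).exists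
  have key : Real.exp (a₁ * x) / 4 * (Real.exp (a₂ * x) / 4) ≤
      |C| * (Real.exp (b₁ * x) * Real.exp (b₂ * x)) := by
    have hs₁ : 0 ≤ Real.sinh (b₁ * x) := Real.sinh_nonneg_iff.2 (by positivity)
    have hs₂ : 0 ≤ Real.sinh (b₂ * x) := Real.sinh_nonneg_iff.2 (by positivity)
    have hs : 0 ≤ Real.sinh (a₁ * x) := Real.sinh_nonneg_iff.2 (by positivity)
    calc _ ≤ Real.sinh (a₁ * x) * Real.sinh (a₂ * x) :=
        mul_le_mul (lower hx₁ ha₁) (lower hx₂ ha₂) (by positivity) hs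
      _ ≤ C * (Real.sinh (b₁ * x) * Real.sinh (b₂ * x)) := h x hx0
      _ ≤ |C| * (Real.exp (b₁ * x) * Real.exp (b₂ * x)) := by
        gcongr
        exacts [le_abs_self C, upper _, upper _]
  have hexp : Real.exp (a₁ * x) * Real.exp (a₂ * x) =
      Real.exp ((a₁ + a₂ - (b₁ + b₂)) * x) * (Real.exp (b₁ * x) * Real.exp (b₂ * x)) := by
    simp only [← Real.exp_add]
    ring_nf
  have hpos : 0 < Real.exp (b₁ * x) * Real.exp (b₂ * x) := by positivity
  nlinarith [mul_lt_mul_of_pos_right hx hpos]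

lemma le_of_isPosDefFun_sinh_ratio {a₁ a₂ b₁ b₂ : ℝ} (ha₁ : 0 < a₁) (ha₂ : 0 < a₂)
    (hb : b₂ ≤ b₁) (hb₂ : 0 < b₂) {f : ℝ → ℝ}
    (hf : ∀ x : ℝ, x ≠ 0 → f x =
      Real.sinh (a₁ * x) * Real.sinh (a₂ * x) / (Real.sinh (b₁ * x) * Real.sinh (b₂ * x)))
    (hf0 : f 0 = a₁ * a₂ / (b₁ * b₂)) (h : IsPosDefFun fun x => (f x : ℂ)) : a₁ ≤ b₁ := by
  by_contra! hlt
  have hb₁ : 0 < b₁ := hb₂.trans_le hb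
  set G : ℂ → ℂ := fun z => (a₁ * sinhc (a₁ * z)) * (a₂ * sinhc (a₂ * z)) /
    ((b₁ * sinhc (b₁ * z)) * (b₂ * sinhc (b₂ * z))) with hGdef
  have hGf (x : ℝ) : G x = f x := by
    by_cases hx : x = 0
    · simp [hGdef, hx, hf0, sinhc_zero]
    · simp only [hGdef, mul_sinhc_mul_mul ha₁.ne' hx, mul_sinhc_mul_mul ha₂.ne' hx,
        mul_sinhc_mul_mul hb₁.ne' hx, mul_sinhc_mul_mul hb₂.ne' hx, hf x hx]
      norm_cast
      field_simp
  have hne {b : ℝ} (h0 : 0 < b) (hle : b ≤ b₁) {z : ℂ} (hz : |z.im| < Real.pi / b₁) :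
      (b : ℂ) * sinhc (b * z) ≠ 0 := by
    refine mul_ne_zero (Complex.ofReal_ne_zero.2 h0.ne') (sinhc_ne_zero ?_)
    rw [Complex.im_ofReal_mul, abs_mul, abs_of_pos h0]
    rw [lt_div_iff₀' hb₁] at hz
    exact (mul_le_mul_of_nonneg_right hle (abs_nonneg _)).trans_lt hz
  have hdiff (a : ℝ) : Differentiable ℂ fun z : ℂ => (a : ℂ) * sinhc (a * z) :=
    (differentiable_sinhc.comp (differentiable_id.const_mul _)).const_mul _
  have hG : DifferentiableOn ℂ G {z | |z.im| < Real.pi / b₁} :=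
    ((hdiff a₁).mul (hdiff a₂)).differentiableOn.div
      ((hdiff b₁).mul (hdiff b₂)).differentiableOn
      fun z hz => mul_ne_zero (hne hb₁ le_rfl hz) (hne hb₂ hb hz)
  have hle := IsPosDefFun.re_zero_le_re_mul_I (y := Real.pi / a₁) hG (by simpa only [hGf] using h)
    (fun z => by simp only [hGdef, mul_neg, sinhc_neg])
    (by rw [abs_of_pos (by positivity)]; gcongr)
  have hzero : G ((Real.pi / a₁ : ℝ) * Complex.I) = 0 := by
    have : (a₁ : ℂ) * ((Real.pi / a₁ : ℝ) * Complex.I) = Real.pi * Complex.I := by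
      have : (a₁ : ℂ) ≠ 0 := Complex.ofReal_ne_zero.2 ha₁.ne'
      push_cast
      field_simp
    simp only [hGdef, this, sinhc_pi_mul_I, mul_zero, zero_mul, zero_div]
  have h0 := hGf 0
  rw [Complex.ofReal_zero] at h0
  rw [hzero, h0, Complex.ofReal_re, hf0, Complex.zero_re] at hle
  have : 0 < a₁ * a₂ / (b₁ * b₂) := by positivity
  linarith

theorem sinh_two_factor_posdef_iff (a₁ a₂ b₁ b₂ : ℝ)
    (ha : a₁ ≥ a₂) (ha₂ : 0 < a₂) (hb : b₁ ≥ b₂) (hb₂ : 0 < b₂)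
    (f : ℝ → ℝ)
    (hf : ∀ x : ℝ, x ≠ 0 → f x =
      Real.sinh (a₁ * x) * Real.sinh (a₂ * x) / (Real.sinh (b₁ * x) * Real.sinh (b₂ * x)))
    (hf0 : f 0 = a₁ * a₂ / (b₁ * b₂)) :
    (IsPosDefFun fun x => ((f x : ℝ) : ℂ)) ↔ a₁ ≤ b₁ ∧ a₁ + a₂ ≤ b₁ + b₂ := by
  have ha₁ : 0 < a₁ := ha₂.trans_le ha
  have hb₁ : 0 < b₁ := hb₂.trans_le hb
  refine ⟨fun h => ⟨le_of_isPosDefFun_sinh_ratio ha₁ ha₂ hb hb₂ hf hf0 h,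
    add_le_add_of_sinh_mul_sinh_le (C := f 0) ha₁ ha₂ hb₁ hb₂ fun x hx => ?_⟩, fun h => ?_⟩
  · have hs₁ : 0 < Real.sinh (b₁ * x) := Real.sinh_pos_iff.2 (by positivity)
    have hs₂ : 0 < Real.sinh (b₂ * x) := Real.sinh_pos_iff.2 (by positivity)
    rw [← div_le_iff₀ (mul_pos hs₁ hs₂), ← hf x hx.ne']
    exact h.re_le x
  · convert isPosDefFun_sinhRatio_mul ha ha₂ hb hb₂ h.1 h.2 using 2 with x
    rw [← Complex.ofReal_mul]
    congr 1
    by_cases hx : x = 0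
    · simp only [hx, hf0, sinhRatio, if_true]
      rw [div_mul_div_comm]
    · simp only [hf x hx, sinhRatio, hx, if_false]
      rw [div_mul_div_comm]
end
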